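/- arXiv:math/0409149 — 2 statements merged into one kernel-verified Lean document; each statement's English description precedes it below -/
import Mathlib

section
/- Let 1 ≤ k ≤ n and let a_1 ≤ a_2 ≤ ⋯ ≤ a_k be integers with 1 ≤ a_1 and a_ι ≤ n−k+ι+1 for each ι = 1,…,k. Then the product set W_{⟦a_k,n⟧}·W_{⟦a_{k−1},n−1⟧}⋯W_{⟦a_1,n−k+1⟧}·W_{J_k} is the union, over tuples (r_1,…,r_k) ∈ ∏_{ι=1}^{k} ⟦a_ι, n−k+ι+1⟧, of the left cosets w_{r_k}^{n} w_{r_{k−1}}^{n−1} ⋯ w_{r_1}^{n−k+1} W_{J_k}, and these cosets are pairwise distinct. -/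
open scoped Pointwise
open Matrix

noncomputable section

/-- The simple reflection `s_i` (1-based indexing, `1 ≤ i ≤ n`), i.e. the transposition
`(i, i+1)` of `{1, …, n+1}`, as a permutation of `Fin (n+1)`; junk value `1` outside the range. -/
def sRef (n i : ℕ) : Equiv.Perm (Fin (n + 1)) :=
  if h : 1 ≤ i ∧ i ≤ n then Equiv.swap ⟨i - 1, by omega⟩ ⟨i, by omega⟩ else 1

/-- `w_r^{r'} = s_r s_{r+1} ⋯ s_{r'}` (equal to `1` when `r = r' + 1`). -/
def wRR (n r r' : ℕ) : Equiv.Perm (Fin (n + 1)) :=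
  ((List.range' r (r' + 1 - r)).map (sRef n)).prod

/-- The subgroup `W_I` of the Weyl group generated by the `s_i`, `i ∈ I`. -/
def WI (n : ℕ) (I : Finset ℕ) : Subgroup (Equiv.Perm (Fin (n + 1))) :=
  Subgroup.closure (sRef n '' I)

/-- `w_i = w_i^n w_{i-1}^{n-1} ⋯ w_1^{n-i+1}`. -/
def wBig (n i : ℕ) : Equiv.Perm (Fin (n + 1)) :=
  ((List.range i).map fun t => wRR n (i - t) (n - t)).prod

/-- `w_{r_k}^n w_{r_{k-1}}^{n-1} ⋯ w_{r_1}^{n-k+1}` for a tuple `r : Fin k → ℕ`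
(where `r ι` is the paper's `r_{ι+1}`). -/
def wProd (n k : ℕ) (r : Fin k → ℕ) : Equiv.Perm (Fin (n + 1)) :=
  (List.ofFn fun t : Fin k => wRR n (r t.rev) (n - (t : ℕ))).prod

/-- The Coxeter length of `w` with respect to the generators `s_1, …, s_n`. -/
def lenW (n : ℕ) (w : Equiv.Perm (Fin (n + 1))) : ℕ :=
  sInf { d | ∃ f : Fin d → ℕ, (∀ m, f m ∈ Finset.Icc 1 n) ∧
    (List.ofFn fun m => sRef n (f m)).prod = w }

/-!
The group `W_{⟦a,m⟧}` consists of all permutations supported on `⟦a,m+1⟧`, and `w_r^m` sends the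
point `m+1` to `r`. Hence an element `g` of `W_{⟦a,m⟧}` lies in `w_r^m W_{⟦a,m-1⟧}` exactly for
`r = g(m+1)`, so the `w_r^m` with `r ∈ ⟦a,m+1⟧` represent the cosets of `W_{⟦a,m-1⟧}`. Decomposing
the leftmost factor `W_{⟦a_k,n⟧}` in this way leaves a factor `W_{⟦a_k,n-1⟧}`, which the next group
`W_{⟦a_{k-1},n-1⟧}` absorbs because `a_{k-1} ≤ a_k`; the claim follows by induction on `k`. The
cosets are distinct because `r_k` is the image of `n+1` under every element of the coset, and after
cancelling `w_{r_k}^n` the remaining `r_ι` are recovered in the same way.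
-/

open Equiv (Perm)

theorem subgroup_mul_eq_of_le {G : Type*} [Group G] {H K : Subgroup G} (h : H ≤ K) :
    (H * K : Set G) = K :=
  Set.Subset.antisymm (Set.mul_subset_iff.2 fun _ hx _ hy ↦ mul_mem (h hx) hy)
    (Set.subset_mul_right _ H.one_mem)

variable {n : ℕ}

section SimpleReflections

theorem sRef_succ_apply_succ (i : Fin n) : sRef n (i + 1) i.succ = i.castSucc := by
  rw [sRef, dif_pos (by omega)]
  exact Equiv.swap_apply_right _ _

theorem sRef_apply_of_ne {i : ℕ} {x : Fin (n + 1)} (hx : (x : ℕ) ≠ i) (hx' : (x : ℕ) + 1 ≠ i) :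
    sRef n i x = x := by
  unfold sRef
  split_ifs with hi
  · apply Equiv.swap_apply_of_ne_of_ne <;> simp only [ne_eq, Fin.ext_iff] <;> omega
  · rfl

theorem wRR_succ_self (m : ℕ) : wRR n (m + 1) m = 1 := by
  simp [wRR]

theorem wRR_eq_sRef_mul {r m : ℕ} (h : r ≤ m) : wRR n r m = sRef n r * wRR n (r + 1) m := by
  simp only [wRR, show m + 1 - r = m + 1 - (r + 1) + 1 by omega, List.range'_succ, List.map_cons,
    List.prod_cons]

theorem wRR_succ_apply_self {j m : ℕ} (hjm : j ≤ m) (hm : m < n + 1) :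
    wRR n (j + 1) m ⟨m, hm⟩ = ⟨j, by omega⟩ := by
  induction hjm using Nat.decreasingInduction with
  | self => rw [wRR_succ_self, Perm.one_apply]
  | of_succ j hj ih =>
    rw [wRR_eq_sRef_mul hj, Perm.mul_apply, ih]
    exact sRef_succ_apply_succ ⟨j, by omega⟩

end SimpleReflections

section Parabolic

theorem WI_mono {I J : Finset ℕ} (h : I ⊆ J) : WI n I ≤ WI n J :=
  Subgroup.closure_mono (Set.image_mono (mod_cast h))

theorem wRR_mem_WI {a r m : ℕ} (h : a ≤ r) : wRR n r m ∈ WI n (Finset.Icc a m) := by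
  refine Subgroup.list_prod_mem _ fun w hw ↦ ?_
  obtain ⟨i, hi, rfl⟩ := List.mem_map.1 hw
  rw [List.mem_range'_1] at hi
  exact Subgroup.subset_closure ⟨i, by simp only [Finset.coe_Icc, Set.mem_Icc]; omega, rfl⟩

variable (n) in
/-- The group of permutations of `{1, …, n+1}` supported on `⟦a, b+1⟧`, which
`WI_Icc_eq_intervalPerms` identifies with `W_{⟦a,b⟧}`. The point `j` of `{1, …, n+1}` is encoded as
`j - 1 : Fin (n + 1)`. -/
def intervalPerms (a b : ℕ) : Subgroup (Perm (Fin (n + 1))) :=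
  fixingSubgroup _ {x : Fin (n + 1) | (x : ℕ) + 1 < a ∨ b < (x : ℕ)}

theorem mem_intervalPerms {a b : ℕ} {g : Perm (Fin (n + 1))} :
    g ∈ intervalPerms n a b ↔ ∀ x : Fin (n + 1), (x : ℕ) + 1 < a ∨ b < (x : ℕ) → g x = x :=
  mem_fixingSubgroup_iff _

theorem WI_Icc_le_intervalPerms (a b : ℕ) : WI n (Finset.Icc a b) ≤ intervalPerms n a b := by
  rw [WI, Subgroup.closure_le]
  rintro _ ⟨i, hi, rfl⟩
  rw [Finset.coe_Icc, Set.mem_Icc] at hi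
  exact mem_intervalPerms.2 fun x hx ↦ sRef_apply_of_ne (by omega) (by omega)

theorem intervalPerms_eq_bot {a b : ℕ} (h : b < a) : intervalPerms n a b = ⊥ := by
  refine (Subgroup.eq_bot_iff_forall _).2 fun g hg ↦ Equiv.ext fun x ↦ ?_
  have fixes_ne : ∀ y : Fin (n + 1), (y : ℕ) ≠ b → g y = y := fun y hy ↦
    mem_intervalPerms.1 hg y (by omega)
  by_contra hx
  have hxb : (x : ℕ) = b := not_imp_comm.1 (fixes_ne x) hx
  exact hx (g.injective (fixes_ne (g x) fun h ↦ hx (Fin.ext (h.trans hxb.symm))))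

theorem exists_wRR_mul_eq_of_mem_intervalPerms {a b : ℕ} (hab : a ≤ b + 2) (hb : b + 1 ≤ n)
    {g : Perm (Fin (n + 1))} (hg : g ∈ intervalPerms n a (b + 1)) :
    ∃ r ∈ Set.Icc a (b + 2), ∃ v ∈ intervalPerms n a b, wRR n r (b + 1) * v = g := by
  rw [mem_intervalPerms] at hg
  set top : Fin (n + 1) := ⟨b + 1, by omega⟩ with htop
  have image_mem : a ≤ g top + 1 ∧ (g top : ℕ) ≤ b + 1 := by
    by_contra! h
    have fixed : (g top : ℕ) = b + 1 := congrArg Fin.val (g.injective (hg (g top) (by omega)))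
    omega
  have hw := mem_intervalPerms.1
    (WI_Icc_le_intervalPerms _ _ (wRR_mem_WI (n := n) (m := b + 1) image_mem.1))
  refine ⟨g top + 1, ⟨image_mem.1, by omega⟩, _, mem_intervalPerms.2 fun x hx ↦ ?_,
    mul_inv_cancel_left _ g⟩
  rw [Perm.mul_apply, Perm.inv_eq_iff_eq]
  by_cases hxtop : x = top
  · rw [hxtop, wRR_succ_apply_self image_mem.2]
  · have hx' : (x : ℕ) + 1 < a ∨ b + 1 < (x : ℕ) := by
      simp only [Fin.ext_iff, htop] at hxtop
      omega
    rw [hg x hx', hw x hx']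

theorem WI_Icc_eq_intervalPerms {a b : ℕ} (ha : 1 ≤ a) (hb : b ≤ n) :
    WI n (Finset.Icc a b) = intervalPerms n a b := by
  refine (WI_Icc_le_intervalPerms a b).antisymm ?_
  induction b with
  | zero => simp [intervalPerms_eq_bot ha]
  | succ b ih =>
    by_cases hab : a ≤ b + 1
    · intro g hg
      obtain ⟨r, hr, v, hv, rfl⟩ := exists_wRR_mul_eq_of_mem_intervalPerms (by omega) hb hg
      exact mul_mem (wRR_mem_WI hr.1)
        (WI_mono (Finset.Icc_subset_Icc_right b.le_succ) (ih (by omega) hv))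
    · simp [intervalPerms_eq_bot (n := n) (not_le.1 hab)]

theorem WI_Icc_succ_eq_image_wRR_mul {a b : ℕ} (ha : 1 ≤ a) (hab : a ≤ b + 2) (hb : b + 1 ≤ n) :
    (WI n (Finset.Icc a (b + 1)) : Set (Perm (Fin (n + 1)))) =
      (wRR n · (b + 1)) '' Set.Icc a (b + 2) * WI n (Finset.Icc a b) := by
  apply Set.Subset.antisymm
  · intro g hg
    obtain ⟨r, hr, v, hv, rfl⟩ :=
      exists_wRR_mul_eq_of_mem_intervalPerms hab hb (WI_Icc_le_intervalPerms _ _ hg)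
    rw [← WI_Icc_eq_intervalPerms ha (by omega)] at hv
    exact Set.mul_mem_mul ⟨r, hr, rfl⟩ hv
  · rintro _ ⟨_, ⟨r, hr, rfl⟩, v, hv, rfl⟩
    exact mul_mem (wRR_mem_WI hr.1) (WI_mono (Finset.Icc_subset_Icc_right b.le_succ) hv)

theorem injOn_mk_wRR {b : ℕ} (hb : b + 1 ≤ n) :
    Set.InjOn (fun r ↦ (wRR n r (b + 1) : Perm (Fin (n + 1)) ⧸ WI n (Finset.Icc 1 b)))
      (Set.Icc 1 (b + 2)) := by
  rintro r ⟨hr, hr'⟩ s ⟨hs, hs'⟩ hrs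
  obtain ⟨i, rfl⟩ := Nat.exists_eq_add_of_le' hr
  obtain ⟨j, rfl⟩ := Nat.exists_eq_add_of_le' hs
  have fixes_top := mem_intervalPerms.1 (WI_Icc_le_intervalPerms _ _ (QuotientGroup.eq.1 hrs))
    ⟨b + 1, by omega⟩ (.inr b.lt_succ_self)
  rw [Perm.mul_apply, Perm.inv_eq_iff_eq, wRR_succ_apply_self (by omega),
    wRR_succ_apply_self (by omega), Fin.mk.injEq] at fixes_top
  rw [fixes_top]

end Parabolic

section Products

variable {k p : ℕ}

variable (n p) in
/-- The product `w_{r_k}^{p+k} ⋯ w_{r_1}^{p+1}`, with `r ι` standing for `r_{ι+1}`. For `p = n - k`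
this is `wProd n k r`; fixing `p` instead of `n - k` keeps the last factors unchanged when `k`
grows. -/
def cosetRep (r : Fin k → ℕ) : Perm (Fin (n + 1)) :=
  (List.ofFn fun t : Fin k ↦ wRR n (r t.rev) (p + t.rev + 1)).prod

variable (n p) in
/-- The product set `W_{⟦a_k,p+k⟧} ⋯ W_{⟦a_1,p+1⟧}`, with `a ι` standing for `a_{ι+1}`. -/
def parabolicProd (a : Fin k → ℕ) : Set (Perm (Fin (n + 1))) :=
  (List.ofFn fun t : Fin k ↦
    (WI n (Finset.Icc (a t.rev) (p + t.rev + 1)) : Set (Perm (Fin (n + 1))))).prod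

variable (p) in
/-- The tuples in `∏_{ι=1}^{k} ⟦a_ι, p+ι+1⟧`, with `r ι` and `a ι` standing for `r_{ι+1}` and
`a_{ι+1}`. -/
def indexBox (a : Fin k → ℕ) : Set (Fin k → ℕ) :=
  {r | ∀ ι : Fin k, a ι ≤ r ι ∧ r ι ≤ p + (ι : ℕ) + 2}

theorem cosetRep_succ (r : Fin (k + 1) → ℕ) :
    cosetRep n p r = wRR n (r (Fin.last k)) (p + k + 1) * cosetRep n p (Fin.init r) := by
  simp [cosetRep, Fin.init, List.ofFn_succ, Fin.rev_succ]

theorem parabolicProd_succ (a : Fin (k + 1) → ℕ) :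
    parabolicProd n p a = (WI n (Finset.Icc (a (Fin.last k)) (p + k + 1)) : Set _) *
      parabolicProd n p (Fin.init a) := by
  simp [parabolicProd, Fin.init, List.ofFn_succ, Fin.rev_succ]

theorem mem_indexBox_succ {a r : Fin (k + 1) → ℕ} :
    r ∈ indexBox p a ↔ Fin.init r ∈ indexBox p (Fin.init a) ∧
      r (Fin.last k) ∈ Set.Icc (a (Fin.last k)) (p + k + 2) :=
  Fin.forall_fin_succ'

theorem image_cosetRep_indexBox_succ (a : Fin (k + 1) → ℕ) :
    cosetRep n p '' indexBox p a =
      (wRR n · (p + k + 1)) '' Set.Icc (a (Fin.last k)) (p + k + 2) *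
        cosetRep n p '' indexBox p (Fin.init a) := by
  apply Set.Subset.antisymm
  · rintro _ ⟨r, hr, rfl⟩
    rw [mem_indexBox_succ] at hr
    rw [cosetRep_succ]
    exact Set.mul_mem_mul ⟨_, hr.2, rfl⟩ ⟨_, hr.1, rfl⟩
  · rintro _ ⟨_, ⟨s, hs, rfl⟩, _, ⟨r, hr, rfl⟩, rfl⟩
    refine ⟨Fin.snoc r s, mem_indexBox_succ.2 ?_, by simp [cosetRep_succ]⟩
    simpa using ⟨hr, hs⟩

theorem WI_mul_parabolicProd_mul_WI {b : ℕ} {a : Fin k → ℕ} (hb : 1 ≤ b) (ha : ∀ ι, a ι ≤ b) :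
    (WI n (Finset.Icc b (p + k)) : Set (Perm (Fin (n + 1)))) *
        (parabolicProd n p a * WI n (Finset.Icc 1 p)) =
      parabolicProd n p a * WI n (Finset.Icc 1 p) := by
  cases k with
  | zero =>
    simpa [parabolicProd] using subgroup_mul_eq_of_le (WI_mono (Finset.Icc_subset_Icc_left hb))
  | succ k =>
    rw [parabolicProd_succ, mul_assoc, ← mul_assoc, ← add_assoc,
      subgroup_mul_eq_of_le (WI_mono (Finset.Icc_subset_Icc_left (ha (Fin.last k))))]

theorem parabolicProd_mul_WI (hpk : p + k ≤ n) {a : Fin k → ℕ} (hmono : Monotone a)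
    (ha : ∀ ι, 1 ≤ a ι) (hub : ∀ ι : Fin k, a ι ≤ p + ι + 2) :
    parabolicProd n p a * (WI n (Finset.Icc 1 p) : Set (Perm (Fin (n + 1)))) =
      cosetRep n p '' indexBox p a * WI n (Finset.Icc 1 p) := by
  induction k with
  | zero => simp [parabolicProd, cosetRep, indexBox, Set.range_unique]
  | succ k ih =>
    have ih_init := ih (by omega) (hmono.comp Fin.strictMono_castSucc.monotone)
      (fun ι ↦ ha ι.castSucc) (fun ι ↦ hub ι.castSucc)
    have hinit : ∀ ι, Fin.init a ι ≤ a (Fin.last k) := fun ι ↦ hmono (Fin.le_last _)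
    rw [parabolicProd_succ, WI_Icc_succ_eq_image_wRR_mul (b := p + k) (ha _) (hub (Fin.last k)) hpk,
      mul_assoc, mul_assoc, WI_mul_parabolicProd_mul_WI (ha _) hinit,
      image_cosetRep_indexBox_succ, mul_assoc]
    exact congrArg _ ih_init

theorem cosetRep_mem_WI {r : Fin k → ℕ} (hr : ∀ ι, 1 ≤ r ι) :
    cosetRep n p r ∈ WI n (Finset.Icc 1 (p + k)) := by
  refine Subgroup.list_prod_mem _ fun w hw ↦ ?_
  obtain ⟨t, rfl⟩ := (List.mem_ofFn' _ _).1 hw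
  exact WI_mono (Finset.Icc_subset_Icc_right (by omega)) (wRR_mem_WI (hr _))

theorem injOn_mk_cosetRep (hpk : p + k ≤ n) :
    Set.InjOn
      (fun r : Fin k → ℕ ↦ (cosetRep n p r : Perm (Fin (n + 1)) ⧸ WI n (Finset.Icc 1 p)))
      (indexBox p 1) := by
  induction k with
  | zero => exact Set.injOn_of_subsingleton _ _
  | succ k ih =>
    intro r hr s hs hrs
    rw [mem_indexBox_succ] at hr hs
    have hmem := QuotientGroup.eq.1 hrs
    rw [cosetRep_succ, cosetRep_succ] at hmem
    have hlast : r (Fin.last k) = s (Fin.last k) := by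
      refine injOn_mk_wRR (by omega) hr.2 hs.2 (QuotientGroup.eq.2 ?_)
      have inv_mul_eq {w u w' u' : Perm (Fin (n + 1))} :
          w⁻¹ * w' = u * ((w * u)⁻¹ * (w' * u')) * u'⁻¹ := by group
      rw [inv_mul_eq]
      exact mul_mem (mul_mem (cosetRep_mem_WI fun ι ↦ (hr.1 ι).1)
        (WI_mono (Finset.Icc_subset_Icc_right (Nat.le_add_right p k)) hmem))
        (inv_mem (cosetRep_mem_WI fun ι ↦ (hs.1 ι).1))
    have hinit : Fin.init r = Fin.init s :=
      ih (by omega) hr.1 hs.1 (QuotientGroup.eq.2 (by simpa [hlast, mul_assoc] using hmem))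
    rw [← Fin.snoc_init_self r, ← Fin.snoc_init_self s, hinit, hlast]

theorem sub_add_rev_add_one (hkn : k ≤ n) (t : Fin k) : n - k + t.rev + 1 = n - t := by
  rw [Fin.val_rev]
  omega

theorem wProd_eq_cosetRep (hkn : k ≤ n) : wProd n k = cosetRep n (n - k) := by
  simp only [funext_iff, wProd, cosetRep, sub_add_rev_add_one hkn, implies_true]

theorem parabolicProd_sub (hkn : k ≤ n) (a : Fin k → ℕ) :
    parabolicProd n (n - k) a = (List.ofFn fun t : Fin k ↦
      (WI n (Finset.Icc (a t.rev) (n - t)) : Set (Perm (Fin (n + 1))))).prod := by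
  simp only [parabolicProd, sub_add_rev_add_one hkn]

end Products

/-- Let `1 ≤ k ≤ n` and `a_1 ≤ ⋯ ≤ a_k` (here `a_ι = a ⟨ι-1⟩`) with `1 ≤ a_1`
and `a_ι ≤ n-k+ι+1`.  Then the product set `W_{⟦a_k,n⟧} ⋯ W_{⟦a_1,n-k+1⟧} · W_{J_k}` is the
union of the left cosets `w_{r_k}^n ⋯ w_{r_1}^{n-k+1} W_{J_k}` over the tuples
`(r_1, …, r_k) ∈ ∏_ι ⟦a_ι, n-k+ι+1⟧`, and these cosets are pairwise distinct. -/
theorem stmt10 (n k : ℕ) (hn : 1 ≤ n) (hk1 : 1 ≤ k) (hkn : k ≤ n)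
    (a : Fin k → ℕ) (hmono : Monotone a) (ha1 : 1 ≤ a ⟨0, hk1⟩)
    (hub : ∀ ι : Fin k, a ι ≤ n - k + (ι : ℕ) + 2) :
    ((List.ofFn fun t : Fin k =>
        ((WI n (Finset.Icc (a t.rev) (n - (t : ℕ))) : Subgroup _) : Set (Equiv.Perm (Fin (n + 1))))).prod *
        ((WI n (Finset.Icc 1 (n - k)) : Subgroup _) : Set (Equiv.Perm (Fin (n + 1))))
      = ⋃ r ∈ {r : Fin k → ℕ | ∀ ι : Fin k, a ι ≤ r ι ∧ r ι ≤ n - k + (ι : ℕ) + 2},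
          {wProd n k r} * ((WI n (Finset.Icc 1 (n - k)) : Subgroup _) : Set (Equiv.Perm (Fin (n + 1)))))
    ∧ ∀ r ∈ {r : Fin k → ℕ | ∀ ι : Fin k, a ι ≤ r ι ∧ r ι ≤ n - k + (ι : ℕ) + 2},
        ∀ r' ∈ {r : Fin k → ℕ | ∀ ι : Fin k, a ι ≤ r ι ∧ r ι ≤ n - k + (ι : ℕ) + 2},
        ({wProd n k r} : Set (Equiv.Perm (Fin (n + 1)))) * (WI n (Finset.Icc 1 (n - k)) : Subgroup _)
          = {wProd n k r'} * ((WI n (Finset.Icc 1 (n - k)) : Subgroup _) : Set (Equiv.Perm (Fin (n + 1))))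
        → r = r' := by
  have ha : ∀ ι, 1 ≤ a ι := fun ι ↦ ha1.trans (hmono (Fin.mk_le_of_le_val ι.val.zero_le))
  have hpk : n - k + k ≤ n := (Nat.sub_add_cancel hkn).le
  rw [wProd_eq_cosetRep hkn, ← parabolicProd_sub hkn]
  constructor
  · rw [parabolicProd_mul_WI hpk hmono ha hub, ← Set.iUnion_mul_left_image, Set.biUnion_image]
    simp only [Set.singleton_mul, indexBox]
  · intro r hr s hs hrs
    simp only [Set.singleton_mul] at hrs
    exact injOn_mk_cosetRep hpk (fun ι ↦ ⟨(ha ι).trans (hr ι).1, (hr ι).2⟩)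
      (fun ι ↦ ⟨(ha ι).trans (hs ι).1, (hs ι).2⟩)
      (QuotientGroup.eq.2 ((leftCoset_eq_iff _).1 hrs))
end
end

section
/- Let a, a', b, b' be integers satisfying 1 ≤ a ≤ a' ≤ b ≤ b' ≤ n. Then in W one has the identity w_a^b · w_{a'}^{b'} = w_{a'+1}^{b'} · w_a^{b−1}. -/
open scoped Pointwise
open Matrix

noncomputable section

/-!
The identity is a formal consequence of the relations among the `s_i`. The braid relation
`(s_i s_{i+1}) s_i = s_{i+1} (s_i s_{i+1})` shows that moving `w_a^b` past `s_i` raises the index by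
one for `a ≤ i < b`, hence turns `w_{a'}^{b-1}` into `w_{a'+1}^b`. The next factor `s_b` of
`w_{a'}^{b'}` cancels the last factor of `w_a^b`, and the remaining `w_a^{b-1}` commutes with
`w_{b+1}^{b'}`.
-/

section BraidRelations

variable {M : Type*} [Monoid M]

/-- The braid relations of type `A` among the `s i` with `l ≤ i ≤ u`. Restricting the range of
indices accommodates `sRef n`, whose junk value `1` outside `1, …, n` violates the relations. -/
structure IsBraidFamily (s : ℕ → M) (l u : ℕ) : Prop where
  braid : ∀ i, l ≤ i → i < u → s i * s (i + 1) * s i = s (i + 1) * s i * s (i + 1)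
  commute : ∀ i j, l ≤ i → i + 1 < j → j ≤ u → Commute (s i) (s j)

/-- The ordered product `s r * s (r + 1) * ⋯ * s (t - 1)`. The half-open convention makes
concatenation subtraction-free; the paper's `w_r^{r'}` is the case `t = r' + 1`. -/
def icoProd (s : ℕ → M) (r t : ℕ) : M :=
  ((List.Ico r t).map s).prod

variable {s : ℕ → M}

theorem icoProd_self (r : ℕ) : icoProd s r r = 1 := by
  simp [icoProd]

theorem icoProd_mul_icoProd {p q r : ℕ} (hpq : p ≤ q) (hqr : q ≤ r) :
    icoProd s p q * icoProd s q r = icoProd s p r := by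
  rw [icoProd, icoProd, icoProd, ← List.prod_append, ← List.map_append,
    List.Ico.append_consecutive hpq hqr]

theorem icoProd_succ_right {r t : ℕ} (h : r ≤ t) :
    icoProd s r (t + 1) = icoProd s r t * s t := by
  simp [icoProd, List.Ico.succ_top h]

theorem commute_icoProd {x : M} {r t : ℕ} (h : ∀ i, r ≤ i → i < t → Commute x (s i)) :
    Commute x (icoProd s r t) := by
  refine Commute.list_prod_right _ _ fun y hy ↦ ?_
  obtain ⟨i, hi, rfl⟩ := List.mem_map.mp hy
  obtain ⟨hri, hit⟩ := List.Ico.mem.mp hi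
  exact h i hri hit

theorem semiconjBy_icoProd_succ {x : M} {r t : ℕ} (hrt : r ≤ t)
    (h : ∀ i, r ≤ i → i < t → SemiconjBy x (s i) (s (i + 1))) :
    SemiconjBy x (icoProd s r t) (icoProd s (r + 1) (t + 1)) := by
  induction t, hrt using Nat.le_induction with
  | base => simp only [icoProd_self, SemiconjBy.one_right]
  | succ t hrt ih =>
    rw [icoProd_succ_right hrt, icoProd_succ_right (Nat.succ_le_succ hrt)]
    exact (ih fun i hri hit ↦ h i hri (hit.trans t.lt_succ_self)).mul_right
      (h t hrt t.lt_succ_self)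

namespace IsBraidFamily

variable {l u : ℕ}

theorem commute_icoProd_icoProd (hs : IsBraidFamily s l u) {a b c : ℕ} (ha : l ≤ a)
    (hc : c ≤ u + 1) : Commute (icoProd s a b) (icoProd s (b + 1) c) :=
  commute_icoProd fun j hbj hjc ↦ Commute.symm <| commute_icoProd fun i hai hib ↦
    (hs.commute i j (by omega) (by omega) (by omega)).symm

theorem semiconjBy_icoProd (hs : IsBraidFamily s l u) {a c i : ℕ} (ha : l ≤ a) (hai : a ≤ i)
    (hic : i + 1 < c) (hc : c ≤ u + 1) : SemiconjBy (icoProd s a c) (s i) (s (i + 1)) := by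
  have split : icoProd s a c = icoProd s a i * (s i * s (i + 1)) * icoProd s (i + 2) c := by
    rw [← mul_assoc, ← icoProd_succ_right hai, ← icoProd_succ_right (Nat.le_succ_of_le hai),
      icoProd_mul_icoProd (by omega) hic]
  have left : Commute (icoProd s a i) (s (i + 1)) :=
    (commute_icoProd fun j haj hji ↦
      (hs.commute j (i + 1) (by omega) (by omega) (by omega)).symm).symm
  have middle : SemiconjBy (s i * s (i + 1)) (s i) (s (i + 1)) := by
    rw [SemiconjBy, hs.braid i (by omega) (by omega), mul_assoc]
  have right : Commute (icoProd s (i + 2) c) (s i) :=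
    (commute_icoProd fun j hij hjc ↦ hs.commute i j (by omega) (by omega) (by omega)).symm
  rw [split]
  exact (left.semiconjBy.mul_left middle).mul_left right

end IsBraidFamily

theorem stmt13_general {l u a a' b b' : ℕ} (hs : IsBraidFamily s l u) (hsb : s b * s b = 1)
    (ha : l ≤ a) (haa' : a ≤ a') (ha'b : a' ≤ b) (hbb' : b ≤ b') (hb'u : b' ≤ u) :
    icoProd s a (b + 1) * icoProd s a' (b' + 1) =
      icoProd s (a' + 1) (b' + 1) * icoProd s a b := by
  have shift : SemiconjBy (icoProd s a (b + 1)) (icoProd s a' b) (icoProd s (a' + 1) (b + 1)) :=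
    semiconjBy_icoProd_succ ha'b fun i ha'i hib ↦
      hs.semiconjBy_icoProd ha (haa'.trans ha'i) (by omega) (by omega)
  have cancel : icoProd s a (b + 1) * s b = icoProd s a b := by
    rw [icoProd_succ_right (haa'.trans ha'b), mul_assoc, hsb, mul_one]
  calc icoProd s a (b + 1) * icoProd s a' (b' + 1)
      = icoProd s a (b + 1) * icoProd s a' b * s b * icoProd s (b + 1) (b' + 1) := by
        rw [mul_assoc (icoProd s a (b + 1)), ← icoProd_succ_right ha'b, mul_assoc,
          icoProd_mul_icoProd (by omega) (by omega)]
    _ = icoProd s (a' + 1) (b + 1) * (icoProd s a b * icoProd s (b + 1) (b' + 1)) := by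
        rw [shift.eq, mul_assoc (icoProd s (a' + 1) (b + 1)), cancel, mul_assoc]
    _ = icoProd s (a' + 1) (b + 1) * icoProd s (b + 1) (b' + 1) * icoProd s a b := by
        rw [(hs.commute_icoProd_icoProd ha (by omega)).eq, mul_assoc]
    _ = icoProd s (a' + 1) (b' + 1) * icoProd s a b := by
        rw [icoProd_mul_icoProd (by omega) (by omega)]

end BraidRelations

theorem sRef_eq_swap {n i : ℕ} (h1 : 1 ≤ i) (hn : i ≤ n) :
    sRef n i = Equiv.swap ⟨i - 1, by omega⟩ ⟨i, by omega⟩ :=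
  dif_pos ⟨h1, hn⟩

theorem sRef_mul_self (n i : ℕ) : sRef n i * sRef n i = 1 := by
  rw [sRef]
  split_ifs
  · exact Equiv.swap_mul_self _ _
  · exact mul_one 1

theorem swap_braid {α : Type*} [DecidableEq α] {x y z : α} (hxy : x ≠ y) (hxz : x ≠ z)
    (hyz : y ≠ z) :
    Equiv.swap x y * Equiv.swap y z * Equiv.swap x y =
      Equiv.swap y z * Equiv.swap x y * Equiv.swap y z := by
  rw [Equiv.swap_mul_swap_mul_swap hxy hxz, Equiv.swap_comm x y, Equiv.swap_comm y z,
    Equiv.swap_mul_swap_mul_swap hyz.symm hxz.symm, Equiv.swap_comm]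

theorem isBraidFamily_sRef (n : ℕ) : IsBraidFamily (sRef n) 1 n where
  braid i h1 hin := by
    rw [sRef_eq_swap h1 hin.le, sRef_eq_swap (Nat.le_add_left 1 i) hin]
    apply swap_braid <;> rw [Ne, Fin.mk.injEq] <;> omega
  commute i j h1 hij hjn := by
    rw [sRef_eq_swap h1 (by omega), sRef_eq_swap (by omega) hjn]
    refine (Equiv.Perm.disjoint_swap_swap ?_).commute
    simp only [List.nodup_cons, List.mem_cons, List.not_mem_nil, List.nodup_nil, Fin.mk.injEq,
      not_false_eq_true, or_false, and_true]
    omega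

theorem wRR_eq_icoProd (n r r' : ℕ) : wRR n r r' = icoProd (sRef n) r (r' + 1) :=
  rfl

/-- For integers `1 ≤ a ≤ a' ≤ b ≤ b' ≤ n` one has, in the Weyl group
`W = S_{n+1}`, the identity `w_a^b · w_{a'}^{b'} = w_{a'+1}^{b'} · w_a^{b-1}`. -/
theorem stmt13 (n : ℕ) (hn : 1 ≤ n) (a a' b b' : ℕ)
    (ha : 1 ≤ a) (haa' : a ≤ a') (ha'b : a' ≤ b) (hbb' : b ≤ b') (hb'n : b' ≤ n) :
    wRR n a b * wRR n a' b' = wRR n (a' + 1) b' * wRR n a (b - 1) := by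
  simp only [wRR_eq_icoProd, Nat.sub_add_cancel (show 1 ≤ b by omega)]
  exact stmt13_general (isBraidFamily_sRef n) (sRef_mul_self n b) ha haa' ha'b hbb' hb'n
end
end
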